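/- Let i, j, k be integers with 0 ≤ i ≤ k and j ≥ 0. Then the voxel (i,j,k) belongs to an absentee circle whose defining disc absentee lies in Octant 1 of the xy-plane — that is, there exists an integer r' with 0 ≤ r' ≤ j such that (i,k) ∈ C(r') and (r',j) ∉ C(s) for every integer s ≥ 0 — if and only if there exist integers r' ≥ 1 and r'' ≥ 1 with r' ≤ j such that r'² − k² − k ≤ i² < r'² − k² + k and r''² − j² + j ≤ r'² < (r''+1)² − j² − j. -/

import Mathlib

/-!
For `0 ≤ x ≤ y` and `1 ≤ y`, squaring `y - 1/2 < √(a² - x²) < y + 1/2` and using integrality shows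
that `(x, y)` lies on the digital circle of radius `a` iff `y² - y < a² - x² ≤ y² + y`
(`mem_digCircle_iff`). Hence `(r', j)` is an absentee iff no perfect square lies in the interval
`(r'² + j² - j, r'² + j² + j]`, i.e. iff this interval fits between two consecutive squares
`r''²` and `(r'' + 1)²`, where `r''` is the integer square root of `r'² + j² - j`. The
degenerate radius `r' = 0` does not occur, because `(0, j)` always lies on the circle of radius `j`.
-/

/-- The signed radial deviation of a pixel from the real circle of radius `a`. -/
noncomputable def circVal (a : ℤ) (p : ℤ × ℤ) : ℝ :=
  ((max |p.1| |p.2| : ℤ) : ℝ) - Real.sqrt ((a : ℝ) ^ 2 - ((min |p.1| |p.2| : ℤ) : ℝ) ^ 2)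

/-- The digital circle of radius `a` centered at the origin. -/
noncomputable def digCircle (a : ℤ) : Set (ℤ × ℤ) := {p | |circVal a p| < 1 / 2}

/-- Integer form of membership in a digital circle, in the second octant away from the origin. -/
theorem mem_digCircle_iff (a x y : ℤ) (hx : 0 ≤ x) (hxy : x ≤ y) (hy : 1 ≤ y) :
    (x, y) ∈ digCircle a ↔ a ^ 2 - y ^ 2 - y ≤ x ^ 2 ∧ x ^ 2 < a ^ 2 - y ^ 2 + y := by
  have hy' : (1 : ℝ) ≤ y := by exact_mod_cast hy
  simp only [digCircle, circVal, Set.mem_ofPred_eq, abs_of_nonneg hx, abs_of_nonneg (hx.trans hxy),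
    max_eq_right hxy, min_eq_left hxy, abs_lt]
  have h1 : (-(1 / 2) < (y : ℝ) - √((a : ℝ) ^ 2 - (x : ℝ) ^ 2)) ↔
      a ^ 2 - y ^ 2 - y ≤ x ^ 2 := by
    rw [show (-(1 / 2) < (y : ℝ) - √((a : ℝ) ^ 2 - (x : ℝ) ^ 2)) ↔
      √((a : ℝ) ^ 2 - (x : ℝ) ^ 2) < y + 1 / 2 by constructor <;> intro h <;> linarith,
      Real.sqrt_lt' (by linarith)]
    constructor
    · intro h
      have : ((a ^ 2 - y ^ 2 - y : ℤ) : ℝ) < ((x ^ 2 + 1 : ℤ) : ℝ) := by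
        push_cast; nlinarith
      exact Int.lt_add_one_iff.mp (by exact_mod_cast this)
    · intro h
      have : ((a ^ 2 - y ^ 2 - y : ℤ) : ℝ) ≤ ((x ^ 2 : ℤ) : ℝ) := by exact_mod_cast h
      push_cast at this
      nlinarith
  have h2 : ((y : ℝ) - √((a : ℝ) ^ 2 - (x : ℝ) ^ 2) < 1 / 2) ↔
      x ^ 2 < a ^ 2 - y ^ 2 + y := by
    rw [show ((y : ℝ) - √((a : ℝ) ^ 2 - (x : ℝ) ^ 2) < 1 / 2) ↔
      y - 1 / 2 < √((a : ℝ) ^ 2 - (x : ℝ) ^ 2) by constructor <;> intro h <;> linarith,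
      Real.lt_sqrt (by linarith)]
    constructor
    · intro h
      have : ((x ^ 2 : ℤ) : ℝ) < ((a ^ 2 - y ^ 2 + y : ℤ) : ℝ) := by
        push_cast; nlinarith
      exact_mod_cast this
    · intro h
      have : ((x ^ 2 + 1 : ℤ) : ℝ) ≤ ((a ^ 2 - y ^ 2 + y : ℤ) : ℝ) := by
        exact_mod_cast Int.add_one_le_iff.mpr h
      push_cast at this
      nlinarith
  rw [h1, h2]

theorem zero_mem_digCircle (j : ℤ) (hj : 0 ≤ j) : ((0 : ℤ), j) ∈ digCircle j := by
  have hj' : (0 : ℝ) ≤ j := by exact_mod_cast hj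
  simp [digCircle, circVal, abs_of_nonneg hj', max_eq_right hj', min_eq_left hj',
    Real.sqrt_sq hj']

/-- Theorem 11 of the paper: characterization of the voxels on absentee circles
whose defining disc absentee lies in Octant 1 of the xy-plane. -/
theorem absentee_circle_iff (i j k : ℤ) (hi : 0 ≤ i) (hik : i ≤ k) (hj : 0 ≤ j) :
    (∃ r' : ℤ, 0 ≤ r' ∧ r' ≤ j ∧ (i, k) ∈ digCircle r' ∧
        ∀ s : ℤ, 0 ≤ s → (r', j) ∉ digCircle s) ↔
      ∃ r' r'' : ℤ, 1 ≤ r' ∧ 1 ≤ r'' ∧ r' ≤ j ∧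
        r' ^ 2 - k ^ 2 - k ≤ i ^ 2 ∧ i ^ 2 < r' ^ 2 - k ^ 2 + k ∧
        r'' ^ 2 - j ^ 2 + j ≤ r' ^ 2 ∧ r' ^ 2 < (r'' + 1) ^ 2 - j ^ 2 - j := by
  constructor
  · rintro ⟨r, hr0, hrj, hC, hA⟩
    have hr : 1 ≤ r := by
      by_contra! h
      obtain rfl : r = 0 := by lia
      exact hA j hj (zero_mem_digCircle j hj)
    have hk : 1 ≤ k := by
      by_contra! h
      obtain rfl : k = 0 := by lia
      obtain rfl : i = 0 := by lia
      -- The origin lies only on the circle of radius `0`.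
      have hr' : (1 : ℝ) ≤ r := by exact_mod_cast hr
      have h0 : (0 : ℝ) ≤ r := by linarith
      simp [digCircle, circVal, Real.sqrt_sq h0, abs_of_nonneg h0] at hC
      norm_num at hC
      linarith
    rw [mem_digCircle_iff r i k hi hik hk] at hC
    have hN : 0 < r ^ 2 + j ^ 2 - j := by nlinarith
    have hs0 := Int.sqrt_nonneg (r ^ 2 + j ^ 2 - j)
    have hs1 : Int.sqrt (r ^ 2 + j ^ 2 - j) ^ 2 ≤ r ^ 2 + j ^ 2 - j := by
      have h := Nat.sqrt_le' (r ^ 2 + j ^ 2 - j).toNat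
      zify at h
      rwa [Int.toNat_of_nonneg hN.le] at h
    have hs2 : r ^ 2 + j ^ 2 - j < (Int.sqrt (r ^ 2 + j ^ 2 - j) + 1) ^ 2 := by
      have h := Nat.lt_succ_sqrt' (r ^ 2 + j ^ 2 - j).toNat
      zify at h
      rwa [Int.toNat_of_nonneg hN.le] at h
    generalize Int.sqrt (r ^ 2 + j ^ 2 - j) = q at hs0 hs1 hs2
    have hq := hA (q + 1) (by lia)
    rw [mem_digCircle_iff _ r j hr0 hrj (by lia), not_and'] at hq
    have hq' := hq (by linarith)
    refine ⟨r, q, hr, ?_, hrj, hC.1, hC.2, by linarith, by linarith⟩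
    by_contra! h
    obtain rfl : q = 0 := by lia
    nlinarith
  · rintro ⟨r, q, hr, hq, hrj, h1, h2, h3, h4⟩
    -- For `k = 0` the bounds on `i²` contradict each other.
    have hk : 1 ≤ k := by linarith
    refine ⟨r, by lia, hrj, (mem_digCircle_iff r i k hi hik hk).2 ⟨h1, h2⟩, fun s hs hmem => ?_⟩
    rw [mem_digCircle_iff s r j (by lia) hrj (by lia)] at hmem
    -- Membership would put `s` strictly between `q` and `q + 1`.
    have hs1 : q < s := lt_of_pow_lt_pow_left₀ 2 hs (by linarith [hmem.2])
    have hs2 : s < q + 1 := lt_of_pow_lt_pow_left₀ 2 (by lia) (by linarith [hmem.1])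
    lia
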